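/- arXiv:2604.12332 — 2 statements merged into one kernel-verified Lean document; each statement's English description precedes it below -/
import Mathlib

section
/- Let G be a finite bipartite simple graph with parts L and R (every edge joins a vertex of L to a vertex of R) whose girth equals 8, in which every vertex of L has degree γ, and suppose that any two cycles of length 8 in G with distinct edge sets have no common vertex belonging to L. Let S ⊆ L with |S| = a ≥ 5 be such that every vertex of R has at most 2 neighbors in S, and let b be the number of vertices of R having an odd number of neighbors in S. Then (as real numbers) b ≥ aγ − a(√(24a−23)−1)/4. -/
open SimpleGraph

namespace ETS

lemma sum_sq_le {V : Type*} (T : Finset V) (H : V → V → Prop) [DecidableRel H] [DecidableEq V]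
    (hsymm : ∀ u v, H u v → H v u) (hirr : ∀ u, ¬ H u u)
    (htri : ∀ u v w, H u v → H v w → ¬ H u w)
    (hC : ∀ v u₁ w u₂ u₁' w' u₂', v ≠ w → u₁ ≠ u₂ → v ≠ w' → u₁' ≠ u₂' →
      H v u₁ → H u₁ w → H w u₂ → H u₂ v → H v u₁' → H u₁' w' → H w' u₂' → H u₂' v →
      w = w' ∧ (u₂' = u₁ ∨ u₂' = u₂)) :
    ∑ v ∈ T, (T.filter (H v)).card ^ 2 ≤ T.card ^ 2 := by
  set f : V → V → ℕ := fun v w => (T.filter (fun u => H v u ∧ H u w)).card with hf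
  have h1 : ∑ v ∈ T, (T.filter (H v)).card ^ 2 = ∑ v ∈ T, ∑ w ∈ T, f v w := by
    have e1 : ∀ u, (T.filter (H u)).card ^ 2
        = ∑ v ∈ T, ∑ w ∈ T, (if H v u ∧ H u w then 1 else 0) := by
      intro u
      rw [pow_two, Finset.card_filter, Finset.sum_mul_sum]
      refine Finset.sum_congr rfl fun v _ => Finset.sum_congr rfl fun w _ => ?_
      have : H u v ↔ H v u := ⟨hsymm _ _, hsymm _ _⟩
      by_cases a1 : H v u <;> by_cases a2 : H u w <;> simp [this, a1, a2]
    rw [Finset.sum_congr rfl fun u _ => e1 u, Finset.sum_comm]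
    refine Finset.sum_congr rfl fun v _ => ?_
    rw [Finset.sum_comm]
    refine Finset.sum_congr rfl fun w _ => ?_
    rw [hf]; simp only [Finset.card_filter]
  have h2 : ∀ v ∈ T, ∑ w ∈ T, f v w ≤ T.card := by
    intro v hv
    have hle : ∀ w, w ≠ v → f v w ≤ 2 := by
      intro w hw
      by_contra hcon
      push Not at hcon
      obtain ⟨x, y, z, hx, hy, hz, hxy, hxz, hyz⟩ := Finset.two_lt_card_iff.1 hcon
      simp only [Finset.mem_filter] at hx hy hz
      have := hC v x w y x w z hw.symm hxy hw.symm hxz hx.2.1 hx.2.2 (hsymm _ _ hy.2.2)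
        (hsymm _ _ hy.2.1) hx.2.1 hx.2.2 (hsymm _ _ hz.2.2) (hsymm _ _ hz.2.1)
      rcases this.2 with h | h
      · exact hxz h.symm
      · exact hyz h.symm
    have hun : ∀ w w', w ≠ v → w' ≠ v → 1 < f v w → 1 < f v w' → w = w' := by
      intro w w' hw hw' h h'
      obtain ⟨x, hx, y, hy, hxy⟩ := Finset.one_lt_card.1 h
      obtain ⟨x', hx', y', hy', hxy'⟩ := Finset.one_lt_card.1 h'
      simp only [Finset.mem_filter] at hx hy hx' hy'
      exact (hC v x w y x' w' y' hw.symm hxy hw'.symm hxy' hx.2.1 hx.2.2 (hsymm _ _ hy.2.2)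
        (hsymm _ _ hy.2.1) hx'.2.1 hx'.2.2 (hsymm _ _ hy'.2.2) (hsymm _ _ hy'.2.1)).1
    have hz : ∀ w, H v w → f v w = 0 := by
      intro w hw
      rw [hf]
      simp only [Finset.card_eq_zero, Finset.filter_eq_empty_iff]
      intro u _ hu
      exact htri _ _ _ hu.1 hu.2 hw
    have hvv : f v v = (T.filter (H v)).card := by
      have : T.filter (fun u => H v u ∧ H u v) = T.filter (H v) := by
        ext u
        simp only [Finset.mem_filter]
        exact ⟨fun h => ⟨h.1, h.2.1⟩, fun h => ⟨h.1, h.2, hsymm _ _ h.2⟩⟩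
      exact congrArg Finset.card this
    obtain ⟨w0, hw0, hw0'⟩ : ∃ w0 ∈ T, ∀ w ∈ T, w ≠ v → w ≠ w0 → f v w ≤ 1 := by
      by_cases hex : ∃ w0 ∈ T, w0 ≠ v ∧ 1 < f v w0
      · obtain ⟨w0, h, h', h''⟩ := hex
        refine ⟨w0, h, fun w hw hwv hne => ?_⟩
        by_contra hcon
        exact hne (hun w w0 hwv h' (by omega) h'')
      · push Not at hex
        exact ⟨v, hv, fun w hw hwv _ => hex w hw hwv⟩
    have key : ∀ w ∈ T, f v w + ((if H v w then 1 else 0) + (if w = v then 1 else 0))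
        ≤ 1 + ((if w = v then (T.filter (H v)).card else 0) + (if w = w0 then 1 else 0)) := by
      intro w hw
      by_cases hwv : w = v
      · subst hwv
        simp only [hirr, if_false, if_true, hvv]
        split_ifs <;> omega
      · by_cases hH : H v w
        · simp [hH, hwv, hz w hH]
        · by_cases h0 : w = w0
          · have := hle w hwv
            rw [if_neg hH, if_neg hwv, if_neg hwv, if_pos h0]
            omega
          · have := hw0' w hw hwv h0
            simp [hH, hwv, h0, this]
    have := Finset.sum_le_sum key
    simp only [Finset.sum_add_distrib, Finset.sum_ite_eq', hv, hw0, if_true,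
      ← Finset.card_filter, Finset.sum_const, smul_eq_mul, mul_one] at this
    have e : (T.filter fun i => H v i).card = (T.filter (H v)).card := rfl
    rw [e] at this
    omega
  rw [h1, pow_two]
  calc _ ≤ ∑ v ∈ T, T.card := Finset.sum_le_sum h2
    _ = _ := by simp

lemma final_bound (a X : ℕ) (ha : 5 ≤ a) (h : X ^ 2 ≤ a ^ 3) :
    (X : ℝ) ≤ a * (Real.sqrt (24 * (a : ℝ) - 23) - 1) / 4 := by
  have ha0 : (0 : ℝ) < a := by positivity
  obtain ⟨d, hd⟩ : ∃ d : ℝ, d = X / a := ⟨_, rfl⟩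
  have hX : (X : ℝ) = d * a := by rw [hd]; field_simp
  have hd0 : 0 ≤ d := by rw [hd]; positivity
  have h' : (X : ℝ) ^ 2 ≤ a ^ 3 := by exact_mod_cast h
  have hda : d ^ 2 ≤ a := by
    rw [hX] at h'
    have : d ^ 2 * (a : ℝ) ^ 2 ≤ a * (a : ℝ) ^ 2 := by nlinarith
    exact le_of_mul_le_mul_right this (by positivity)
  have main : 2 * d ^ 2 + d + 3 ≤ 3 * a := by
    rcases Nat.lt_or_ge a 6 with h6 | h6
    · have : a = 5 := by omega
      subst this
      have : X ≤ 11 := by nlinarith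
      have : (X : ℝ) ≤ 11 := by exact_mod_cast this
      have : d ≤ 11 / 5 := by push_cast at hX; linarith
      push_cast
      nlinarith
    · have h6' : (6 : ℝ) ≤ a := by exact_mod_cast h6
      rcases le_total d (5 / 2) with h | h <;> nlinarith
  have : 4 * d + 1 ≤ Real.sqrt (24 * (a : ℝ) - 23) := by
    apply Real.le_sqrt_of_sq_le
    nlinarith
  rw [hX]
  nlinarith

lemma cyc4 {V : Type*} (G : SimpleGraph V) (hg : G.girth = 8) {a b c d : V}
    (h1 : G.Adj a b) (h2 : G.Adj b c) (h3 : G.Adj c d) (h4 : G.Adj d a)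
    (hac : a ≠ c) (hbd : b ≠ d) : False := by
  let p : G.Walk a a := .cons h1 (.cons h2 (.cons h3 (.cons h4 .nil)))
  have hp : p.IsCycle := by
    have := h1.ne; have := h2.ne; have := h3.ne; have := h4.ne
    simp only [p, Walk.cons_isCycle_iff, Walk.cons_isPath_iff, Walk.support_cons, Walk.support_nil,
      Walk.edges_cons, Walk.edges_nil, List.mem_cons, Sym2.eq_iff, Walk.IsPath.nil,
      List.not_mem_nil, or_false]
    grind
  have := hp.girth_le_length
  simp [p] at this
  omega

lemma cyc6 {V : Type*} (G : SimpleGraph V) (hg : G.girth = 8) {a b c d e f : V}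
    (h1 : G.Adj a b) (h2 : G.Adj b c) (h3 : G.Adj c d) (h4 : G.Adj d e) (h5 : G.Adj e f)
    (h6 : G.Adj f a) (hn : [a, b, c, d, e, f].Nodup) : False := by
  let p : G.Walk a a := .cons h1 (.cons h2 (.cons h3 (.cons h4 (.cons h5 (.cons h6 .nil)))))
  have hp : p.IsCycle := by
    simp only [p, Walk.cons_isCycle_iff, Walk.cons_isPath_iff, Walk.support_cons, Walk.support_nil,
      Walk.edges_cons, Walk.edges_nil, List.mem_cons, Sym2.eq_iff, Walk.IsPath.nil,
      List.not_mem_nil, or_false]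
    simp only [List.nodup_cons, List.mem_cons, List.not_mem_nil, or_false] at hn
    grind
  have := hp.girth_le_length
  simp [p] at this
  omega

lemma cyc8 {V : Type*} (G : SimpleGraph V) {a b c d e f g h : V}
    (h1 : G.Adj a b) (h2 : G.Adj b c) (h3 : G.Adj c d) (h4 : G.Adj d e) (h5 : G.Adj e f)
    (h6 : G.Adj f g) (h7 : G.Adj g h) (h8 : G.Adj h a) (hn : [a, b, c, d, e, f, g, h].Nodup) :
    ∃ p : G.Walk a a, p.IsCycle ∧ p.length = 8 ∧
      p.edges = [s(a, b), s(b, c), s(c, d), s(d, e), s(e, f), s(f, g), s(g, h), s(h, a)] := by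
  refine ⟨.cons h1 (.cons h2 (.cons h3 (.cons h4 (.cons h5 (.cons h6 (.cons h7
    (.cons h8 .nil))))))), ?_, by simp, by simp⟩
  simp only [Walk.cons_isCycle_iff, Walk.cons_isPath_iff, Walk.support_cons, Walk.support_nil,
    Walk.edges_cons, Walk.edges_nil, List.mem_cons, Sym2.eq_iff, Walk.IsPath.nil,
    List.not_mem_nil, or_false]
  simp only [List.nodup_cons, List.mem_cons, List.not_mem_nil, or_false] at hn
  grind

end ETS

/-- In a variable-regular Tanner graph of girth `8` in which no two 8-cycles with distinct
edge sets share a variable node, every `(a,b)`-elementary trapping set with `a ≥ 5`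
satisfies `b ≥ aγ − a(√(24a−23)−1)/4`. -/
theorem stmt12 {V : Type*} [Fintype V] (G : SimpleGraph V) (L R : Set V)
    (hdisj : Disjoint L R) (hcover : L ∪ R = Set.univ)
    (hbip : ∀ ⦃u v : V⦄, G.Adj u v → (u ∈ L ∧ v ∈ R) ∨ (u ∈ R ∧ v ∈ L))
    (hgirth : G.girth = 8)
    (γ : ℕ) (hreg : ∀ v ∈ L, Nat.card (G.neighborSet v) = γ)
    (hcyc : ∀ (u v : V) (c₁ : G.Walk u u) (c₂ : G.Walk v v),
      c₁.IsCycle → c₂.IsCycle → c₁.length = 8 → c₂.length = 8 →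
      {e : Sym2 V | e ∈ c₁.edges} ≠ {e : Sym2 V | e ∈ c₂.edges} →
      ∀ w ∈ L, w ∈ c₁.support → w ∉ c₂.support)
    (S : Set V) (hSL : S ⊆ L)
    (a : ℕ) (haS : Nat.card S = a) (ha : 5 ≤ a)
    (hcheck : ∀ r ∈ R, Nat.card {v : V | v ∈ S ∧ G.Adj r v} ≤ 2)
    (b : ℕ) (hb : b = Nat.card {r : V | r ∈ R ∧ Odd (Nat.card {v : V | v ∈ S ∧ G.Adj r v})}) :
    (a : ℝ) * γ - a * (Real.sqrt (24 * (a : ℝ) - 23) - 1) / 4 ≤ (b : ℝ) := by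
  classical
  have hLR : ∀ x y, x ∈ L → y ∈ R → x ≠ y := by
    rintro x y hx hy rfl
    exact Set.disjoint_left.1 hdisj hx hy
  have hSR : ∀ v r, v ∈ S → G.Adj v r → r ∈ R := by
    intro v r hv h
    rcases hbip h with h | h
    · exact h.2
    · exact absurd rfl (hLR v v (hSL hv) h.1)
  obtain ⟨T, hT⟩ : ∃ T : Finset V, ∀ x, x ∈ T ↔ x ∈ S := ⟨S.toFinset, fun x => by simp⟩
  have hTa : T.card = a := by
    rw [← haS, Nat.card_eq_card_toFinset S]
    congr 1
    ext x
    simp [hT]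
  have hn : ∀ r, Nat.card {v : V | v ∈ S ∧ G.Adj r v} = (T.filter (G.Adj r)).card := by
    intro r
    rw [Nat.card_eq_card_toFinset]
    congr 1
    ext x
    simp [hT]
  simp only [hn] at hcheck hb
  have three : ∀ r x y z, x ∈ S → y ∈ S → z ∈ S → G.Adj x r → G.Adj y r → G.Adj z r →
      x ≠ y → x ≠ z → y ≠ z → False := by
    intro r x y z hx hy hz ax ay az hxy hxz hyz
    have h1 := hcheck r (hSR x r hx ax)
    have h2 : 2 < (T.filter (G.Adj r)).card := Finset.two_lt_card_iff.2
      ⟨x, y, z, by simp [hT, hx, ax.symm], by simp [hT, hy, ay.symm],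
        by simp [hT, hz, az.symm], hxy, hxz, hyz⟩
    omega
  obtain ⟨H, hH⟩ : ∃ H : V → V → Prop, ∀ u v, H u v ↔
    (u ≠ v ∧ u ∈ S ∧ v ∈ S ∧ ∃ r, G.Adj u r ∧ G.Adj v r) := ⟨_, fun _ _ => Iff.rfl⟩
  have hsymm : ∀ u v, H u v → H v u := by
    intro u v h
    rw [hH] at *
    obtain ⟨h1, h2, h3, r, h4, h5⟩ := h
    exact ⟨h1.symm, h3, h2, r, h5, h4⟩
  have hirr : ∀ u, ¬ H u u := fun u h => ((hH _ _).1 h).1 rfl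
  have htri : ∀ u v w, H u v → H v w → ¬ H u w := by
    intro u v w h1 h2 h3
    rw [hH] at h1 h2 h3
    obtain ⟨n1, hu, hv, r1, a1, a2⟩ := h1
    obtain ⟨n2, -, hw, r2, a3, a4⟩ := h2
    obtain ⟨n3, -, -, r3, a5, a6⟩ := h3
    have e12 : r1 ≠ r2 := by
      rintro rfl; exact three r1 u v w hu hv hw a1 a2 a4 n1 n3 n2
    have e13 : r1 ≠ r3 := by
      rintro rfl; exact three r1 u v w hu hv hw a1 a2 a6 n1 n3 n2
    have e23 : r2 ≠ r3 := by
      rintro rfl; exact three r2 u v w hu hv hw a5 a3 a4 n1 n3 n2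
    have hr1 := hSR _ _ hu a1
    have hr2 := hSR _ _ hv a3
    have hr3 := hSR _ _ hu a5
    refine ETS.cyc6 G hgirth a1 a2.symm a3 a4.symm a6 a5.symm ?_
    have := hLR u r1 (hSL hu) hr1
    have := hLR u r2 (hSL hu) hr2
    have := hLR u r3 (hSL hu) hr3
    have := hLR v r1 (hSL hv) hr1
    have := hLR v r2 (hSL hv) hr2
    have := hLR v r3 (hSL hv) hr3
    have := hLR w r1 (hSL hw) hr1
    have := hLR w r2 (hSL hw) hr2
    have := hLR w r3 (hSL hw) hr3
    simp only [List.nodup_cons, List.mem_cons, List.not_mem_nil, or_false]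
    grind
  have hcycle : ∀ v u w x, v ≠ w → u ≠ x → H v u → H u w → H w x → H x v →
      ∃ p : G.Walk v v, p.IsCycle ∧ p.length = 8 ∧
        (∀ y ∈ L, (∃ e ∈ p.edges, y ∈ e) ↔ (y = v ∨ y = u ∨ y = w ∨ y = x)) := by
    intro v u w x hvw hux h1 h2 h3 h4
    rw [hH] at h1 h2 h3 h4
    obtain ⟨n1, hv, hu, r1, a1, b1⟩ := h1
    obtain ⟨n2, -, hw, r2, a2, b2⟩ := h2
    obtain ⟨n3, -, hx, r3, a3, b3⟩ := h3
    obtain ⟨n4, -, -, r4, a4, b4⟩ := h4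
    have hr1 := hSR _ _ hv a1
    have hr2 := hSR _ _ hu a2
    have hr3 := hSR _ _ hw a3
    have hr4 := hSR _ _ hx a4
    have e12 : r1 ≠ r2 := by
      rintro rfl; exact three r1 v u w hv hu hw a1 b1 b2 n1 hvw n2
    have e13 : r1 ≠ r3 := by
      rintro rfl; exact three r1 v u w hv hu hw a1 b1 a3 n1 hvw n2
    have e14 : r1 ≠ r4 := by
      rintro rfl; exact three r1 v u x hv hu hx a1 b1 a4 n1 n4.symm hux
    have e23 : r2 ≠ r3 := by
      rintro rfl; exact three r2 u w x hu hw hx a2 b2 b3 n2 hux n3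
    have e24 : r2 ≠ r4 := by
      rintro rfl; exact three r2 u w x hu hw hx a2 b2 a4 n2 hux n3
    have e34 : r3 ≠ r4 := by
      rintro rfl; exact three r3 v w x hv hw hx b4 a3 b3 hvw n4.symm n3
    have k : ∀ y ∈ L, y ≠ r1 ∧ y ≠ r2 ∧ y ≠ r3 ∧ y ≠ r4 := fun y hy =>
      ⟨hLR y _ hy hr1, hLR y _ hy hr2, hLR y _ hy hr3, hLR y _ hy hr4⟩
    have kv := k v (hSL hv)
    have ku := k u (hSL hu)
    have kw := k w (hSL hw)
    have kx := k x (hSL hx)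
    obtain ⟨p, hp, hl, he⟩ := ETS.cyc8 G a1 b1.symm a2 b2.symm a3 b3.symm a4 b4.symm (by
      simp only [List.nodup_cons, List.mem_cons, List.not_mem_nil, or_false]
      grind)
    refine ⟨p, hp, hl, ?_⟩
    intro y hy
    have ky := k y hy
    rw [he]
    simp only [List.mem_cons, List.not_mem_nil, or_false, exists_eq_or_imp, exists_eq_left,
      Sym2.mem_iff]
    tauto
  have hC : ∀ v u₁ w u₂ u₁' w' u₂', v ≠ w → u₁ ≠ u₂ → v ≠ w' → u₁' ≠ u₂' →
      H v u₁ → H u₁ w → H w u₂ → H u₂ v → H v u₁' → H u₁' w' → H w' u₂' → H u₂' v →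
      w = w' ∧ (u₂' = u₁ ∨ u₂' = u₂) := by
    intro v u₁ w u₂ u₁' w' u₂' n1 n2 n3 n4 h1 h2 h3 h4 h1' h2' h3' h4'
    obtain ⟨p, hp, hl, he⟩ := hcycle v u₁ w u₂ n1 n2 h1 h2 h3 h4
    obtain ⟨p', hp', hl', he'⟩ := hcycle v u₁' w' u₂' n3 n4 h1' h2' h3' h4'
    have hvL : v ∈ L := hSL ((hH _ _).1 h1).2.1
    have hwL : w ∈ L := hSL ((hH _ _).1 h3).2.1
    have huL : u₂' ∈ L := hSL ((hH _ _).1 h4').2.1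
    have hE : {e : Sym2 V | e ∈ p.edges} = {e : Sym2 V | e ∈ p'.edges} := by
      by_contra hne
      exact hcyc v v p p' hp hp' hl hl' hne v hvL p.start_mem_support p'.start_mem_support
    have hE' : ∀ e, e ∈ p.edges ↔ e ∈ p'.edges := fun e => Set.ext_iff.1 hE e
    simp only [hE'] at he
    have hnw : ¬ H v w := htri _ _ _ h1 h2
    constructor
    · have := (he' w hwL).1 ((he w hwL).2 (by simp))
      rcases this with h | h | h | h
      · exact absurd h.symm n1
      · exact absurd (h ▸ h1') hnw
      · exact h
      · exact absurd (h ▸ hsymm _ _ h4') hnw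
    · have := (he _ huL).1 ((he' _ huL).2 (by simp))
      rcases this with h | h | h | h
      · exact absurd (h ▸ h4') (hirr v)
      · exact Or.inl h
      · exact absurd (h ▸ hsymm _ _ h4') hnw
      · exact Or.inr h
  have hsq := ETS.sum_sq_le T H hsymm hirr htri hC
  rw [hTa] at hsq
  obtain ⟨X, hX⟩ : ∃ X, X = ∑ v ∈ T, (T.filter (H v)).card := ⟨_, rfl⟩
  have hX2 : X ^ 2 ≤ a ^ 3 := by
    have := sq_sum_le_card_mul_sum_sq (s := T) (f := fun v => (T.filter (H v)).card)
    rw [← hX, hTa] at this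
    calc X ^ 2 ≤ a * _ := this
      _ ≤ a * a ^ 2 := Nat.mul_le_mul_left _ hsq
      _ = a ^ 3 := by ring
  obtain ⟨B, hB⟩ : ∃ B : Finset V, B = Finset.univ.filter
    (fun r => r ∈ R ∧ Odd (T.filter (G.Adj r)).card) := ⟨_, rfl⟩
  have hbB : b = B.card := by
    rw [hb, Nat.card_eq_card_toFinset, hB]
    congr 1
    ext x
    simp
  have hdeg : ∀ v ∈ T, γ ≤ (B.filter (G.Adj v)).card + (T.filter (H v)).card := by
    intro v hv
    have hvS := (hT v).1 hv
    have e1 : γ = (Finset.univ.filter (G.Adj v)).card := by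
      rw [← hreg v (hSL hvS), Nat.card_eq_card_toFinset]
      congr 1
      ext x
      simp
    have e2 : (Finset.univ.filter (G.Adj v)) ⊆ B.filter (G.Adj v) ∪
        Finset.univ.filter (fun r => G.Adj v r ∧ r ∉ B) := by
      intro r hr
      simp only [Finset.mem_union, Finset.mem_filter, Finset.mem_univ, true_and] at *
      tauto
    have e3 : (Finset.univ.filter (fun r => G.Adj v r ∧ r ∉ B)).card ≤ (T.filter (H v)).card := by
      refine Finset.card_le_card_of_forall_subsingleton (fun r w => G.Adj w r) ?_ ?_
      · intro r hr
        simp only [Finset.mem_filter, Finset.mem_univ, true_and] at hr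
        have hrR := hSR v r hvS hr.1
        have hvr : v ∈ T.filter (G.Adj r) := by simp [hv, hr.1.symm]
        have hpos := Finset.card_pos.2 ⟨v, hvr⟩
        have hne : (T.filter (G.Adj r)).card ≠ 1 := by
          intro h
          apply hr.2
          rw [hB]
          simp [hrR, h]
        obtain ⟨w, hw, hwv⟩ := Finset.exists_mem_ne (s := T.filter (G.Adj r)) (by omega) v
        simp only [Finset.mem_filter] at hw
        refine ⟨w, ?_, hw.2.symm⟩
        simp only [Finset.mem_filter, hH]
        exact ⟨hw.1, hwv.symm, hvS, (hT w).1 hw.1, r, hr.1, hw.2.symm⟩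
      · intro w hw r hr s hs
        simp only [Finset.mem_filter, Finset.mem_univ, true_and, Set.mem_ofPred_eq] at hr hs hw
        by_contra hrs
        exact ETS.cyc4 G hgirth hr.1.1 hr.2.symm hs.2 hs.1.1.symm ((hH _ _).1 hw.2).1 hrs
    have e4 := (Finset.card_le_card e2).trans (Finset.card_union_le _ _)
    omega
  have hBs : ∑ v ∈ T, (B.filter (G.Adj v)).card = B.card := by
    have := Finset.sum_card_bipartiteAbove_eq_sum_card_bipartiteBelow (s := T) (t := B) G.Adj
    simp only [Finset.bipartiteAbove, Finset.bipartiteBelow] at this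
    rw [this, Finset.card_eq_sum_ones]
    refine Finset.sum_congr rfl fun r hr => ?_
    rw [hB] at hr
    simp only [Finset.mem_filter, Finset.mem_univ, true_and] at hr
    have h2 := hcheck r hr.1
    have h3 := hr.2
    have h4 : (T.filter (fun v => G.Adj v r)) = T.filter (G.Adj r) := by
      ext x; simp [G.adj_comm]
    rw [h4]
    obtain ⟨k, hk⟩ := h3
    omega
  have htot : a * γ ≤ b + X := by
    have := Finset.sum_le_sum hdeg
    rw [Finset.sum_add_distrib, hBs, ← hX, ← hbB, Finset.sum_const, hTa] at this
    simpa using this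
  have htot' : (a : ℝ) * γ ≤ b + X := by exact_mod_cast htot
  have := ETS.final_bound a X ha hX2
  linarith
end

section
/- Let G be a finite bipartite simple graph with parts L and R (every edge joins a vertex of L to a vertex of R) whose girth equals 8, in which every vertex of L has degree 4, and suppose that any two cycles of length 8 in G with distinct edge sets have no common vertex belonging to L. Let S ⊆ L with |S| = a be nonempty and such that every vertex of R has at most 2 neighbors in S, let b be the number of vertices of R having an odd number of neighbors in S, and suppose b < a. Then: if b = 0 then a ≥ 13; if b = 2 then a ≥ 13; if b = 4 then a ≥ 12; and if b = 6 then a ≥ 10. -/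
open SimpleGraph

namespace ETS

/-- A graph of girth `8` has no 4-cycle. -/
lemma no_four {V : Type*} (G : SimpleGraph V) (hg : G.girth = 8) {v r u s : V}
    (h1 : G.Adj v r) (h2 : G.Adj r u) (h3 : G.Adj u s) (h4 : G.Adj s v)
    (hvu : v ≠ u) (hrs : r ≠ s) : False := by
  have hc : (Walk.cons h1 (Walk.cons h2 (Walk.cons h3 (Walk.cons h4 Walk.nil)))).IsCycle := by
    rw [Walk.cons_isCycle_iff]
    have := h1.ne; have := h2.ne; have := h3.ne; have := h4.ne
    constructor
    · rw [Walk.isPath_def]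
      simp only [Walk.support_cons, Walk.support_nil, List.nodup_cons, List.mem_cons,
        List.not_mem_nil, or_false]
      grind
    · simp only [Walk.edges_cons, Walk.edges_nil, List.mem_cons, List.not_mem_nil, or_false,
        Sym2.eq_iff]
      grind
  have := hc.girth_le_length
  simp [hg] at this

/-- A graph of girth `8` has no 6-cycle. -/
lemma no_six {V : Type*} (G : SimpleGraph V) (hg : G.girth = 8) {x₁ x₂ x₃ x₄ x₅ x₆ : V}
    (h1 : G.Adj x₁ x₂) (h2 : G.Adj x₂ x₃) (h3 : G.Adj x₃ x₄) (h4 : G.Adj x₄ x₅)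
    (h5 : G.Adj x₅ x₆) (h6 : G.Adj x₆ x₁)
    (hn : [x₁, x₂, x₃, x₄, x₅, x₆].Nodup) : False := by
  have hc : (Walk.cons h1 (Walk.cons h2 (Walk.cons h3 (Walk.cons h4
      (Walk.cons h5 (Walk.cons h6 Walk.nil)))))).IsCycle := by
    simp only [List.nodup_cons, List.mem_cons, List.not_mem_nil, or_false] at hn
    rw [Walk.cons_isCycle_iff]
    constructor
    · rw [Walk.isPath_def]
      simp only [Walk.support_cons, Walk.support_nil, List.nodup_cons, List.mem_cons,
        List.not_mem_nil, or_false]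
      grind
    · simp only [Walk.edges_cons, Walk.edges_nil, List.mem_cons, List.not_mem_nil, or_false,
        Sym2.eq_iff]
      grind
  have := hc.girth_le_length
  simp [hg] at this

/-- Eight distinct cyclically adjacent vertices give an 8-cycle. -/
lemma eight {V : Type*} (G : SimpleGraph V) {x₁ x₂ x₃ x₄ x₅ x₆ x₇ x₈ : V}
    (h1 : G.Adj x₁ x₂) (h2 : G.Adj x₂ x₃) (h3 : G.Adj x₃ x₄) (h4 : G.Adj x₄ x₅)
    (h5 : G.Adj x₅ x₆) (h6 : G.Adj x₆ x₇) (h7 : G.Adj x₇ x₈) (h8 : G.Adj x₈ x₁)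
    (hn : [x₁, x₂, x₃, x₄, x₅, x₆, x₇, x₈].Nodup) :
    ∃ c : G.Walk x₁ x₁, c.IsCycle ∧ c.length = 8 ∧
      ∀ e, e ∈ c.edges ↔ e ∈ [s(x₁, x₂), s(x₂, x₃), s(x₃, x₄), s(x₄, x₅), s(x₅, x₆),
        s(x₆, x₇), s(x₇, x₈), s(x₈, x₁)] := by
  refine ⟨Walk.cons h1 (Walk.cons h2 (Walk.cons h3 (Walk.cons h4
      (Walk.cons h5 (Walk.cons h6 (Walk.cons h7 (Walk.cons h8 Walk.nil))))))), ?_, by simp,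
      by simp⟩
  simp only [List.nodup_cons, List.mem_cons, List.not_mem_nil, or_false] at hn
  rw [Walk.cons_isCycle_iff]
  constructor
  · rw [Walk.isPath_def]
    simp only [Walk.support_cons, Walk.support_nil, List.nodup_cons, List.mem_cons,
      List.not_mem_nil, or_false]
    grind
  · simp only [Walk.edges_cons, Walk.edges_nil, List.mem_cons, List.not_mem_nil, or_false,
      Sym2.eq_iff]
    grind

open Classical in
/-- The counting bound: in a triangle-free graph supported on `S`, where every vertex determines
at most one 4-cycle through it, the squared degree sum is at most `|S| ^ 3`. -/
lemma count {V : Type*} [Fintype V] (S : Finset V) (A : V → V → Prop)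
    (hsymm : ∀ u v, A u v → A v u) (hirr : ∀ u, ¬ A u u)
    (htri : ∀ u v w, u ∈ S → v ∈ S → w ∈ S → A u v → A v w → A u w → False)
    (hfour : ∀ v w w' x y x' y', v ∈ S → w ∈ S → w' ∈ S → x ∈ S → y ∈ S → x' ∈ S → y' ∈ S →
      v ≠ w → v ≠ w' → x ≠ y → x' ≠ y' →
      A v x → A x w → A w y → A y v → A v x' → A x' w' → A w' y' → A y' v →
      w' = w ∧ (x' = x ∨ x' = y)) :
    (∑ v ∈ S, (S.filter (A v)).card) ^ 2 ≤ S.card ^ 3 := by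
  have key : ∀ v ∈ S, ∑ u ∈ S.filter (A v), (S.filter (A u)).card ≤ S.card := by
    intro v hv
    set f : V → ℕ := fun w => ((S.filter (A v)).filter (fun u => A u w)).card with hf
    have e1 : ∑ u ∈ S.filter (A v), (S.filter (A u)).card = ∑ w ∈ S, f w :=
      Finset.sum_card_bipartiteAbove_eq_sum_card_bipartiteBelow A
    have fv : f v = (S.filter (A v)).card := by
      simp only [hf]
      congr 1
      ext u; simp only [Finset.mem_filter]
      grind
    have fadj : ∀ w ∈ S, A v w → f w = 0 := by
      intro w hw h
      simp only [hf, Finset.card_eq_zero, Finset.filter_eq_empty_iff, Finset.mem_filter]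
      rintro u ⟨hu, h1⟩ h2
      exact htri v u w hv hu hw h1 h2 h
    have get2 : ∀ w, 1 < f w → ∃ x y, x ∈ S ∧ y ∈ S ∧ x ≠ y ∧ A v x ∧ A x w ∧ A v y ∧ A y w := by
      intro w h
      obtain ⟨x, hx, y, hy, hxy⟩ := Finset.one_lt_card.1 h
      simp only [Finset.mem_filter] at hx hy
      exact ⟨x, y, hx.1.1, hy.1.1, hxy, hx.1.2, hx.2, hy.1.2, hy.2⟩
    have f2 : ∀ w ∈ S, w ≠ v → f w ≤ 2 := by
      intro w hw hwv
      by_contra hcon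
      obtain ⟨x, y, hx, hy, hxy, h1, h2, h3, h4⟩ := get2 w (by omega)
      have : (S.filter (A v)).filter (fun u => A u w) ⊆ {x, y} := by
        intro z hz
        simp only [Finset.mem_filter] at hz
        simp only [Finset.mem_insert, Finset.mem_singleton]
        by_cases hzx : z = x
        · exact Or.inl hzx
        · exact (hfour v w w x y z x hv hw hw hx hy hz.1.1 hx hwv.symm hwv.symm hxy hzx h1 h2
            (hsymm _ _ h4) (hsymm _ _ h3) hz.1.2 hz.2 (hsymm _ _ h2) (hsymm _ _ h1)).2
      have := (Finset.card_le_card this).trans Finset.card_le_two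
      exact hcon this
    have funiq : ∀ w ∈ S, ∀ w' ∈ S, w ≠ v → w' ≠ v → 1 < f w → 1 < f w' → w' = w := by
      intro w hw w' hw' hwv hwv' h h'
      obtain ⟨x, y, hx, hy, hxy, h1, h2, h3, h4⟩ := get2 w h
      obtain ⟨x', y', hx', hy', hxy', h1', h2', h3', h4'⟩ := get2 w' h'
      exact (hfour v w w' x y x' y' hv hw hw' hx hy hx' hy' hwv.symm hwv'.symm hxy hxy' h1 h2
            (hsymm _ _ h4) (hsymm _ _ h3) h1' h2' (hsymm _ _ h4') (hsymm _ _ h3')).1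
    obtain ⟨w0, hw0⟩ : ∃ w0, ∀ w ∈ S, w ≠ v → f w + (if A v w then 1 else 0) ≤
        1 + (if w = w0 then 1 else 0) := by
      by_cases hex : ∃ w0 ∈ S, w0 ≠ v ∧ 1 < f w0
      · obtain ⟨w0, h0, h1, h2⟩ := hex
        refine ⟨w0, fun w hw hwv => ?_⟩
        have := fadj w hw
        have := f2 w hw hwv
        have := funiq w0 h0 w hw h1 hwv h2
        split_ifs <;> grind
      · refine ⟨v, fun w hw hwv => ?_⟩
        have := fadj w hw
        have : ¬ 1 < f w := fun h => hex ⟨w, hw, hwv, h⟩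
        split_ifs <;> grind
    have hs := Finset.sum_le_sum (s := S.erase v)
      (fun w hw => hw0 w (Finset.mem_of_mem_erase hw) (Finset.ne_of_mem_erase hw))
    rw [Finset.sum_add_distrib, Finset.sum_add_distrib, ← Finset.card_filter,
      ← Finset.card_filter, ← Finset.card_eq_sum_ones] at hs
    have h1 : (S.erase v).filter (A v) = S.filter (A v) := by
      ext u; simp only [Finset.mem_filter, Finset.mem_erase]
      grind
    have h2 : ((S.erase v).filter (fun w => w = w0)).card ≤ 1 := by
      apply Finset.card_le_one.2
      simp only [Finset.mem_filter]
      grind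
    have h3 := Finset.card_erase_add_one hv
    have h4 := Finset.add_sum_erase S f hv
    rw [h1] at hs
    omega
  have hsq : ∑ v ∈ S, (S.filter (A v)).card ^ 2 ≤ S.card * S.card := by
    calc ∑ v ∈ S, (S.filter (A v)).card ^ 2
        = ∑ v ∈ S, ∑ u ∈ S.filter (A v), (S.filter (A u)).card := by
          have : ∀ v ∈ S, ∑ u ∈ S.filter (A v), (S.filter (A u)).card
              = ∑ u ∈ S, if A v u then (S.filter (A u)).card else 0 := by
            intro v _; rw [Finset.sum_filter]
          rw [Finset.sum_congr rfl this, Finset.sum_comm]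
          apply Finset.sum_congr rfl
          intro u _
          rw [← Finset.sum_filter, Finset.sum_const, smul_eq_mul, sq]
          congr 2
          ext x; simp only [Finset.mem_filter]
          grind
      _ ≤ ∑ v ∈ S, S.card := Finset.sum_le_sum key
      _ = S.card * S.card := by simp
  calc _ ≤ S.card * ∑ v ∈ S, (S.filter (A v)).card ^ 2 := sq_sum_le_card_mul_sum_sq
    _ ≤ S.card * (S.card * S.card) := Nat.mul_le_mul_left _ hsq
    _ = _ := by ring

end ETS

/-- In a variable-regular Tanner graph of girth `8` with variable degree `4` in which no two
8-cycles with distinct edge sets share a variable node, the smallest sizes of `(a,b)`-ETSs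
with `b < a` are at least `a = 13, 13, 12, 10` for `b = 0, 2, 4, 6` respectively. -/
theorem stmt14 {V : Type*} [Fintype V] (G : SimpleGraph V) (L R : Set V)
    (hdisj : Disjoint L R) (hcover : L ∪ R = Set.univ)
    (hbip : ∀ ⦃u v : V⦄, G.Adj u v → (u ∈ L ∧ v ∈ R) ∨ (u ∈ R ∧ v ∈ L))
    (hgirth : G.girth = 8)
    (hreg : ∀ v ∈ L, Nat.card (G.neighborSet v) = 4)
    (hcyc : ∀ (u v : V) (c₁ : G.Walk u u) (c₂ : G.Walk v v),
      c₁.IsCycle → c₂.IsCycle → c₁.length = 8 → c₂.length = 8 →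
      {e : Sym2 V | e ∈ c₁.edges} ≠ {e : Sym2 V | e ∈ c₂.edges} →
      ∀ w ∈ L, w ∈ c₁.support → w ∉ c₂.support)
    (S : Set V) (hSL : S ⊆ L) (hne : S.Nonempty)
    (a : ℕ) (haS : Nat.card S = a)
    (hcheck : ∀ r ∈ R, Nat.card {v : V | v ∈ S ∧ G.Adj r v} ≤ 2)
    (b : ℕ) (hb : b = Nat.card {r : V | r ∈ R ∧ Odd (Nat.card {v : V | v ∈ S ∧ G.Adj r v})})
    (hba : b < a) :
    (b = 0 → 13 ≤ a) ∧ (b = 2 → 13 ≤ a) ∧ (b = 4 → 12 ≤ a) ∧ (b = 6 → 10 ≤ a) := by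
  classical
  have hLR : ∀ x y, x ∈ L → y ∈ R → x ≠ y := by
    rintro x y hx hy rfl
    exact Set.disjoint_left.1 hdisj hx hy
  have hR : ∀ x ∈ S, ∀ r, G.Adj x r → r ∈ R := by
    intro x hx r h
    rcases hbip h with h' | h'
    · exact h'.2
    · exact absurd rfl (hLR x x (hSL hx) h'.1)
  set T : Finset V := S.toFinset with hT
  have mT : ∀ x, x ∈ T ↔ x ∈ S := by intro x; simp [hT]
  have hTa : T.card = a := by
    rw [← haS, hT, Nat.card_eq_fintype_card, Set.toFinset_card]
  have hk : ∀ r, Nat.card {v : V | v ∈ S ∧ G.Adj r v} = (T.filter (fun v => G.Adj v r)).card := by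
    intro r
    rw [Nat.card_eq_fintype_card, ← Set.toFinset_card]
    congr 1
    ext x; simp [mT, G.adj_comm]
  have hk2 : ∀ r ∈ R, (T.filter (fun v => G.Adj v r)).card ≤ 2 := fun r hr => by
    rw [← hk]; exact hcheck r hr
  have three : ∀ r x y z, x ∈ S → y ∈ S → z ∈ S → G.Adj x r → G.Adj y r → G.Adj z r →
      x = y ∨ y = z ∨ x = z := by
    intro r x y z hx hy hz h1 h2 h3
    by_contra hcon
    push Not at hcon
    have hsub : ({x, y, z} : Finset V) ⊆ T.filter (fun v => G.Adj v r) := by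
      intro u hu
      simp only [Finset.mem_insert, Finset.mem_singleton] at hu
      simp only [Finset.mem_filter, mT]
      rcases hu with rfl | rfl | rfl <;> exact ⟨by assumption, by assumption⟩
    have h3c := Finset.card_eq_three.2 ⟨x, y, z, hcon.1, hcon.2.2, hcon.2.1, rfl⟩
    have := Finset.card_le_card hsub
    have := hk2 r (hR x hx r h1)
    omega
  let A : V → V → Prop := fun u v => u ≠ v ∧ ∃ r, G.Adj u r ∧ G.Adj v r
  have hsymm : ∀ u v, A u v → A v u := fun u v ⟨h, r, h1, h2⟩ => ⟨h.symm, r, h2, h1⟩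
  have htri : ∀ u v w, u ∈ T → v ∈ T → w ∈ T → A u v → A v w → A u w → False := by
    rintro u v w hu hv hw ⟨huv, r, hr1, hr2⟩ ⟨hvw, s, hs1, hs2⟩ ⟨huw, t, ht1, ht2⟩
    rw [mT] at hu hv hw
    have hrs : r ≠ s := by
      rintro rfl; have := three r u v w hu hv hw hr1 hr2 hs2; tauto
    have hst : s ≠ t := by
      rintro rfl; have := three s u v w hu hv hw ht1 hs1 hs2; tauto
    have hrt : r ≠ t := by
      rintro rfl; have := three r u v w hu hv hw hr1 hr2 ht2; tauto
    have hr := hR u hu r hr1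
    have hs := hR v hv s hs1
    have ht := hR u hu t ht1
    refine ETS.no_six G hgirth hr1 hr2.symm hs1 hs2.symm ht2 ht1.symm ?_
    simp only [List.nodup_cons, List.mem_cons, List.not_mem_nil, or_false]
    have := fun z => hLR u z (hSL hu); have := fun z => hLR v z (hSL hv); have := fun z => hLR w z (hSL hw)
    grind
  have mk8 : ∀ v x w y, v ∈ S → x ∈ S → w ∈ S → y ∈ S → v ≠ w → x ≠ y →
      A v x → A x w → A w y → A y v → ∃ c : G.Walk v v, c.IsCycle ∧ c.length = 8 ∧
      (∀ u ∈ S, (∃ e ∈ c.edges, u ∈ e) ↔ u = v ∨ u = x ∨ u = w ∨ u = y) := by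
    rintro v x w y hv hx hw hy hvw hxy ⟨n1, r1, a1, b1⟩ ⟨n2, r2, a2, b2⟩ ⟨n3, r3, a3, b3⟩
      ⟨n4, r4, a4, b4⟩
    have h12 : r1 ≠ r2 := by
      rintro rfl; have := three r1 v x w hv hx hw a1 b1 b2; tauto
    have h13 : r1 ≠ r3 := by
      rintro rfl; have := three r1 v x w hv hx hw a1 b1 a3; tauto
    have h14 : r1 ≠ r4 := by
      rintro rfl; have := three r1 v x y hv hx hy a1 b1 a4; grind
    have h23 : r2 ≠ r3 := by
      rintro rfl; have := three r2 x w y hx hw hy a2 b2 b3; tauto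
    have h24 : r2 ≠ r4 := by
      rintro rfl; have := three r2 x w y hx hw hy a2 b2 a4; tauto
    have h34 : r3 ≠ r4 := by
      rintro rfl; have := three r3 w y v hw hy hv a3 b3 b4; grind
    have q1 := hR _ hv _ a1
    have q2 := hR _ hx _ a2
    have q3 := hR _ hw _ a3
    have q4 := hR _ hy _ a4
    have := fun z => hLR v z (hSL hv); have := fun z => hLR x z (hSL hx); have := fun z => hLR w z (hSL hw)
    have := fun z => hLR y z (hSL hy)
    obtain ⟨c, hc, hl, he⟩ := ETS.eight G a1 b1.symm a2 b2.symm a3 b3.symm a4 b4.symm (by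
      simp only [List.nodup_cons, List.mem_cons, List.not_mem_nil, or_false]
      grind)
    refine ⟨c, hc, hl, fun u hu => ?_⟩
    have d1 := hLR u _ (hSL hu) q1
    have d2 := hLR u _ (hSL hu) q2
    have d3 := hLR u _ (hSL hu) q3
    have d4 := hLR u _ (hSL hu) q4
    simp only [he, List.mem_cons, List.not_mem_nil, or_false, or_and_right, exists_or,
      exists_eq_left, Sym2.mem_iff, d1, d2, d3, d4, false_or]
    tauto
  have hfour : ∀ v w w' x y x' y', v ∈ T → w ∈ T → w' ∈ T → x ∈ T → y ∈ T → x' ∈ T → y' ∈ T →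
      v ≠ w → v ≠ w' → x ≠ y → x' ≠ y' →
      A v x → A x w → A w y → A y v → A v x' → A x' w' → A w' y' → A y' v →
      w' = w ∧ (x' = x ∨ x' = y) := by
    intro v w w' x y x' y' hv hw hw' hx hy hx' hy' n1 n2 n3 n4 h1 h2 h3 h4 h1' h2' h3' h4'
    have t1 : ¬ A v w' := fun h => htri v x' w' hv hx' hw' h1' h2' h
    have t2 : ¬ A v w := fun h => htri v x w hv hx hw h1 h2 h
    rw [mT] at hv hw hw' hx hy hx' hy'
    obtain ⟨c, hc, hl, he⟩ := mk8 v x w y hv hx hw hy n1 n3 h1 h2 h3 h4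
    obtain ⟨c', hc', hl', he'⟩ := mk8 v x' w' y' hv hx' hw' hy' n2 n4 h1' h2' h3' h4'
    have heq : {e : Sym2 V | e ∈ c.edges} = {e : Sym2 V | e ∈ c'.edges} := by
      by_contra hne'
      exact hcyc v v c c' hc hc' hl hl' hne' v (hSL hv) c.start_mem_support c'.start_mem_support
    have hee : ∀ e, e ∈ c.edges ↔ e ∈ c'.edges := fun e => Set.ext_iff.1 heq e
    have p1 := (he w' hw').1 (by
      obtain ⟨e, h, h'⟩ := (he' w' hw').2 (by tauto)
      exact ⟨e, (hee e).2 h, h'⟩)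
    have p2 := (he x' hx').1 (by
      obtain ⟨e, h, h'⟩ := (he' x' hx').2 (by tauto)
      exact ⟨e, (hee e).2 h, h'⟩)
    have hyv := hsymm _ _ h4
    constructor
    · rcases p1 with h | h | h | h
      · exact absurd h.symm n2
      · rw [h] at t1; exact absurd h1 t1
      · exact h
      · rw [h] at t1; exact absurd hyv t1
    · rcases p2 with h | h | h | h
      · exact absurd h.symm h1'.1
      · exact Or.inl h
      · rw [h] at h1'; exact absurd h1' t2
      · exact Or.inr h
  have hcount : (∑ v ∈ T, (T.filter (A v)).card) ^ 2 ≤ T.card ^ 3 := by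
    convert ETS.count T A hsymm (fun u h => h.1 rfl) htri hfour
  -- odd checks
  set B : Finset V := Finset.univ.filter
    (fun r => r ∈ R ∧ (T.filter (fun v => G.Adj v r)).card = 1) with hB
  have hBb : B.card = b := by
    rw [hb, Nat.card_eq_fintype_card, ← Set.toFinset_card]
    congr 1
    ext r
    simp only [hB, Finset.mem_filter, Finset.mem_univ, true_and, Set.mem_toFinset,
      Set.mem_ofPred_eq, hk]
    refine and_congr_right fun hr => ?_
    have := hk2 r hr
    generalize (T.filter (fun v => G.Adj v r)).card = n at *
    interval_cases n <;> decide
  have hdeg : ∀ v ∈ T, 4 ≤ (T.filter (A v)).card + (B.filter (fun r => G.Adj v r)).card := by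
    intro v hv
    have hvS := (mT v).1 hv
    have h4 : (Finset.univ.filter (fun r => G.Adj v r)).card = 4 := by
      rw [← hreg v (hSL hvS), Nat.card_eq_fintype_card, ← Set.toFinset_card]
      congr 1
      ext r; simp
    set N := Finset.univ.filter (fun r => G.Adj v r) with hN
    have hsplit := Finset.card_filter_add_card_filter_not (s := N) (fun r => r ∈ B)
    have e1 : N.filter (fun r => r ∈ B) = B.filter (fun r => G.Adj v r) := by
      ext r; simp only [hN, Finset.mem_filter, Finset.mem_univ, true_and]; tauto
    have other : ∀ r, r ∈ N.filter (fun r => ¬ r ∈ B) → ∃ u ∈ T, u ≠ v ∧ G.Adj u r := by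
      intro r hr
      simp only [hN, hB, Finset.mem_filter, Finset.mem_univ, true_and] at hr
      have hrR := hR v hvS r hr.1
      have hvm : v ∈ T.filter (fun v => G.Adj v r) := Finset.mem_filter.2 ⟨hv, hr.1⟩
      have hpos := Finset.card_pos.2 ⟨v, hvm⟩
      have hne1 : (T.filter (fun v => G.Adj v r)).card ≠ 1 := fun h => hr.2 ⟨hrR, h⟩
      obtain ⟨u, hu, huv⟩ := Finset.exists_mem_ne
        (show 1 < (T.filter (fun v => G.Adj v r)).card by omega) v
      exact ⟨u, (Finset.mem_filter.1 hu).1, huv, (Finset.mem_filter.1 hu).2⟩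
    choose! g hg1 hg2 hg3 using other
    have e2 : (N.filter (fun r => ¬ r ∈ B)).card ≤ (T.filter (A v)).card := by
      apply Finset.card_le_card_of_injOn g
      · intro r hr
        have hr' : r ∈ N.filter (fun r => ¬ r ∈ B) := hr
        have hvr : G.Adj v r := by
          simp only [hN, Finset.mem_filter] at hr'; exact hr'.1.2
        exact Finset.mem_coe.2 (Finset.mem_filter.2
          ⟨hg1 r hr', (hg2 r hr').symm, r, hvr, hg3 r hr'⟩)
      · intro r hr s hs hrs
        have hr' : r ∈ N.filter (fun r => ¬ r ∈ B) := hr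
        have hs' : s ∈ N.filter (fun r => ¬ r ∈ B) := hs
        have hvr : G.Adj v r := by
          simp only [hN, Finset.mem_filter] at hr'; exact hr'.1.2
        have hvs : G.Adj v s := by
          simp only [hN, Finset.mem_filter] at hs'; exact hs'.1.2
        by_contra hne'
        have h3 := hg3 s hs'
        rw [← hrs] at h3
        exact ETS.no_four G hgirth hvr (hg3 r hr').symm h3 hvs.symm (hg2 r hr').symm hne'
    rw [e1] at hsplit
    omega
  have hsum := Finset.sum_le_sum hdeg
  rw [Finset.sum_add_distrib, Finset.sum_const, smul_eq_mul, hTa] at hsum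
  have hBsum : ∑ v ∈ T, (B.filter (fun r => G.Adj v r)).card = b := by
    have := Finset.sum_card_bipartiteAbove_eq_sum_card_bipartiteBelow (s := T) (t := B) G.Adj
    refine Eq.trans this ?_
    rw [← hBb, Finset.card_eq_sum_ones]
    apply Finset.sum_congr rfl
    intro r hr
    exact (Finset.mem_filter.1 hr).2.2
  rw [hBsum] at hsum
  rw [hTa] at hcount
  generalize (∑ v ∈ T, (T.filter (A v)).card) = D at *
  have fin : ∀ k, b = k → k < a → a ≤ 12 → (a * 4 - k) ^ 2 ≤ a ^ 3 := by
    intro k hk' _ _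
    exact (Nat.pow_le_pow_left (by omega) 2).trans hcount
  clear hcount hsum
  refine ⟨fun h => ?_, fun h => ?_, fun h => ?_, fun h => ?_⟩ <;>
  · by_contra hcon
    have hlt : a < 13 := by omega
    have := fin b rfl hba (by omega)
    subst h
    clear_value T B
    clear fin hTa haS hb hBb hBsum
    interval_cases a <;> omega
end
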